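/- Let Z = A(x,y) ∂_x + B(x,y) ∂_y be an analytic vector field near the origin of R^2 with A = x^α y^β Ã and B = x^α y^β B̃ for natural numbers α, β and analytic functions Ã, B̃. Suppose ∂_x A + ∂_y B = f·A + g·B for smooth functions f, g. Then α·Ã/x + β·B̃/y extends to an analytic function; in particular, if α ≠ 0 then x divides Ã, and if β ≠ 0 then y divides B̃ (i.e., the vector field (Ã, B̃) is tangent to the set {x^α y^β = 0}). -/

import Mathlib

open Filter Topology

/-- Division of the homogeneous part of degree `n+1`. -/
noncomputable def divSeries {E : Type*} [NormedAddCommGroup E] [NormedSpace ℝ E]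
    (π : E →L[ℝ] E) (e : E) (p : FormalMultilinearSeries ℝ E ℝ) :
    FormalMultilinearSeries ℝ E ℝ := fun n =>
  ∑ k : Fin (n + 1), ((p (n + 1)).curryMid k e).compContinuousLinearMap
    (fun i => if (k.succAbove i).val < k.val then ContinuousLinearMap.id ℝ E else π)

theorem divSeries_norm_le {E : Type*} [NormedAddCommGroup E] [NormedSpace ℝ E]
    (π : E →L[ℝ] E) (e : E) (p : FormalMultilinearSeries ℝ E ℝ)
    (hπ : ‖π‖ ≤ 1) (he : ‖e‖ ≤ 1) (n : ℕ) :
    ‖divSeries π e p n‖ ≤ (n + 1) * ‖p (n + 1)‖ := by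
  unfold divSeries
  refine (norm_sum_le _ _).trans ?_
  have key : ∀ k ∈ (Finset.univ : Finset (Fin (n + 1))),
      ‖((p (n + 1)).curryMid k e).compContinuousLinearMap
    (fun i => if (k.succAbove i).val < k.val then ContinuousLinearMap.id ℝ E else π)‖
      ≤ ‖p (n + 1)‖ := by
    intro k _
    refine (ContinuousMultilinearMap.norm_compContinuousLinearMap_le _ _).trans ?_
    have h1 : ‖(p (n + 1)).curryMid k e‖ ≤ ‖p (n + 1)‖ := by
      refine (ContinuousLinearMap.le_opNorm _ _).trans ?_
      rw [ContinuousMultilinearMap.norm_curryMid]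
      exact mul_le_of_le_one_right (norm_nonneg _) he
    have h2 : ∏ i : Fin n, ‖(if (k.succAbove i).val < k.val then
        ContinuousLinearMap.id ℝ E else π)‖ ≤ 1 := by
      apply Finset.prod_le_one
      · intros; positivity
      · intro i _
        split_ifs
        · exact ContinuousLinearMap.norm_id_le
        · exact hπ
    calc _ ≤ ‖p (n + 1)‖ * 1 := by gcongr
      _ = _ := mul_one _
  refine (Finset.sum_le_sum key).trans ?_
  simp

theorem divSeries_apply {E : Type*} [NormedAddCommGroup E] [NormedSpace ℝ E]
    (π : E →L[ℝ] E) (e : E) (l : E → ℝ) (p : FormalMultilinearSeries ℝ E ℝ)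
    (h : ∀ z, z - π z = l z • e) (n : ℕ) (z : E) :
    l z * divSeries π e p n (fun _ => z) = p (n + 1) (fun _ => z) - p (n + 1) (fun _ => π z) := by
  let v : ℕ → Fin (n + 1) → E := fun k i => if i.val < k then z else π z
  have step : ∀ k : Fin (n + 1), l z * ((p (n + 1)).curryMid k e).compContinuousLinearMap
      (fun i => if (k.succAbove i).val < k.val then ContinuousLinearMap.id ℝ E else π) (fun _ => z)
      = p (n + 1) (v (k.val + 1)) - p (n + 1) (v k.val) := by
    intro k
    have e1 : v (k.val + 1) = Function.update (v k.val) k z := by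
      funext i
      by_cases hi : i = k
      · subst hi; simp [v]
      · have : i.val ≠ k.val := fun h => hi (Fin.ext h)
        simp only [v, Function.update_of_ne hi]
        congr 1
        apply propext; omega
    have e2 : v k.val = Function.update (v k.val) k (π z) := by
      funext i
      by_cases hi : i = k
      · subst hi; simp [v]
      · simp [Function.update_of_ne hi]
    have e3 : k.insertNth e (fun i => (if (k.succAbove i).val < k.val then
        ContinuousLinearMap.id ℝ E else π) z) = Function.update (v k.val) k e := by
      rw [Fin.insertNth_eq_iff]
      refine ⟨by simp, ?_⟩
      funext i
      simp only [Fin.removeNth, v, Function.update_of_ne (Fin.succAbove_ne k i)]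
      split_ifs <;> simp
    rw [e1]
    conv_rhs => rw [e2]
    rw [Function.update_idem, ← (p (n + 1)).map_update_sub, h,
      (p (n + 1)).map_update_smul, ContinuousMultilinearMap.compContinuousLinearMap_apply,
      ContinuousMultilinearMap.curryMid_apply, e3, smul_eq_mul]
  unfold divSeries
  rw [sum_apply, Finset.mul_sum, Finset.sum_congr rfl (fun k _ => step k),
    Fin.sum_univ_eq_sum_range (fun k => p (n + 1) (v (k + 1)) - p (n + 1) (v k)),
    Finset.sum_range_sub (fun k => p (n + 1) (v k))]
  congr 2
  · funext i; simp [v, i.2]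

theorem divSeries_radius_pos {E : Type*} [NormedAddCommGroup E] [NormedSpace ℝ E]
    (π : E →L[ℝ] E) (e : E) (p : FormalMultilinearSeries ℝ E ℝ)
    (hπ : ‖π‖ ≤ 1) (he : ‖e‖ ≤ 1) (hp : 0 < p.radius) : 0 < (divSeries π e p).radius := by
  obtain ⟨C, r, hC, hr, hb⟩ := p.le_mul_pow_of_radius_pos hp
  let s : NNReal := ⟨1 / (2 * r), by positivity⟩
  have : (s : ENNReal) ≤ (divSeries π e p).radius := by
    apply FormalMultilinearSeries.le_radius_of_bound _ (C * r)
    intro n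
    have hn : ((n : ℝ) + 1) ≤ 2 ^ n := by
      exact_mod_cast Nat.lt_two_pow_self (n := n)
    calc ‖divSeries π e p n‖ * (1 / (2 * r)) ^ n
        ≤ ((n + 1) * ‖p (n + 1)‖) * (1 / (2 * r)) ^ n := by
          gcongr; exact divSeries_norm_le π e p hπ he n
      _ ≤ (2 ^ n * (C * r ^ (n + 1))) * (1 / (2 * r)) ^ n := by
          gcongr; exact hb _
      _ = C * r := by
          rw [div_pow, mul_pow, one_pow, pow_succ]
          field_simp
  refine lt_of_lt_of_le ?_ this
  rw [ENNReal.coe_pos, ← NNReal.coe_pos]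
  show 0 < 1 / (2 * r)
  positivity

theorem analytic_division {E : Type*} [NormedAddCommGroup E] [NormedSpace ℝ E]
    (π : E →L[ℝ] E) (e : E) (l : E → ℝ) (hπ : ‖π‖ ≤ 1) (he : ‖e‖ ≤ 1)
    (h : ∀ z, z - π z = l z • e) (F : E → ℝ) (hF : AnalyticAt ℝ F 0)
    (h0 : ∀ᶠ z in 𝓝 (0 : E), F (π z) = 0) :
    ∃ C : E → ℝ, AnalyticAt ℝ C 0 ∧ ∀ᶠ z in 𝓝 (0 : E), F z = l z * C z := by
  obtain ⟨p, hp⟩ := hF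
  have hr := divSeries_radius_pos π e p hπ he hp.radius_pos
  have hq := (divSeries π e p).hasFPowerSeriesOnBall hr
  refine ⟨(divSeries π e p).sum, hq.analyticAt, ?_⟩
  have hπ0 : Tendsto π (𝓝 0) (𝓝 0) := by simpa using π.continuous.tendsto 0
  filter_upwards [h0, hp.eventually_hasSum, hπ0.eventually hp.eventually_hasSum,
    hq.eventually_hasSum] with z hz h1 h2 h3
  rw [zero_add] at h1 h2 h3
  rw [hz] at h2
  have h4 := h1.sub h2
  rw [sub_zero] at h4
  have h5 : HasSum (fun n => p (n + 1) (fun _ => z) - p (n + 1) (fun _ => π z))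
      (l z * (divSeries π e p).sum z) := by
    simpa only [divSeries_apply π e l p h] using h3.mul_left (l z)
  have h6 := (hasSum_nat_add_iff' (f := fun n => p n (fun _ => z) - p n (fun _ => π z)) 1).2 h4
  have h7 : (p 0 fun _ => z) = p 0 fun _ => π z := by
    congr 1; funext i; exact i.elim0
  simp only [Finset.range_one, Finset.sum_singleton, h7, sub_self, sub_zero] at h6
  exact h6.unique h5

theorem eq_zero_of_punctured (h : ℝ → ℝ) (hc : ContinuousAt h 0)
    (hz : ∀ᶠ x in 𝓝 (0 : ℝ), x ≠ 0 → h x = 0) : h 0 = 0 := by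
  have h1 : Tendsto h (𝓝[≠] 0) (𝓝 (h 0)) := hc.tendsto.mono_left nhdsWithin_le_nhds
  have h2 : Tendsto h (𝓝[≠] 0) (𝓝 0) := by
    refine tendsto_const_nhds.congr' ?_
    have := (eventually_nhdsWithin_iff (s := {(0 : ℝ)}ᶜ) (a := 0) (p := fun x => h x = 0)).2 hz
    exact this.mono fun x hx => hx.symm
  exact tendsto_nhds_unique h1 h2

theorem pack_division (U : Set (ℝ × ℝ)) (hU : IsOpen U) (h0 : (0 : ℝ × ℝ) ∈ U)
    (F l : ℝ × ℝ → ℝ)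
    (h : ∃ C : ℝ × ℝ → ℝ, AnalyticAt ℝ C 0 ∧ ∀ᶠ z in 𝓝 (0 : ℝ × ℝ), F z = l z * C z) :
    ∃ V ⊆ U, IsOpen V ∧ (0 : ℝ × ℝ) ∈ V ∧ ∃ C : ℝ × ℝ → ℝ,
      AnalyticOnNhd ℝ C V ∧ ∀ p ∈ V, F p = l p * C p := by
  obtain ⟨C, hC, hz⟩ := h
  obtain ⟨V, hV, hVo, hV0⟩ := eventually_nhds_iff.1
    ((hC.eventually_analyticAt.and hz).and (hU.mem_nhds h0))
  exact ⟨V, fun p hp => (hV p hp).2, hVo, hV0, C, fun p hp => (hV p hp).1.1,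
    fun p hp => (hV p hp).1.2⟩


/-- Tangency of the reduced vector field to the exceptional divisor: if
`Z = A ∂ₓ + B ∂_y` is analytic near the origin of `ℝ²` with
`A = x^α y^β · Ã`, `B = x^α y^β · B̃` (`Ã, B̃` analytic) and the divergence
identity `∂ₓA + ∂_yB = f·A + g·B` holds for continuous `f, g`, then if `α ≠ 0`
the function `x` divides `Ã` (i.e. `Ã = x·C` with `C` analytic), and if `β ≠ 0`
then `y` divides `B̃`; in particular the vector field `(Ã, B̃)` is tangent to
`{x^α y^β = 0}`. -/
theorem stmt5 (U : Set (ℝ × ℝ)) (hU : IsOpen U) (h0 : (0 : ℝ × ℝ) ∈ U)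
    (α β : ℕ) (A B Atil Btil f g : ℝ × ℝ → ℝ)
    (hAtil : AnalyticOnNhd ℝ Atil U) (hBtil : AnalyticOnNhd ℝ Btil U)
    (hAdef : ∀ p : ℝ × ℝ, A p = p.1 ^ α * p.2 ^ β * Atil p)
    (hBdef : ∀ p : ℝ × ℝ, B p = p.1 ^ α * p.2 ^ β * Btil p)
    (hf : ContinuousOn f U) (hg : ContinuousOn g U)
    (hdiv : ∀ p ∈ U, fderiv ℝ A p (1, 0) + fderiv ℝ B p (0, 1) = f p * A p + g p * B p) :
    (α ≠ 0 → ∃ V ⊆ U, IsOpen V ∧ (0 : ℝ × ℝ) ∈ V ∧ ∃ C : ℝ × ℝ → ℝ,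
      AnalyticOnNhd ℝ C V ∧ ∀ p ∈ V, Atil p = p.1 * C p) ∧
    (β ≠ 0 → ∃ V ⊆ U, IsOpen V ∧ (0 : ℝ × ℝ) ∈ V ∧ ∃ C : ℝ × ℝ → ℝ,
      AnalyticOnNhd ℝ C V ∧ ∀ p ∈ V, Btil p = p.2 * C p) := by
  have hdA : ∀ p ∈ U, DifferentiableAt ℝ Atil p := fun p hp => (hAtil p hp).differentiableAt
  have hdB : ∀ p ∈ U, DifferentiableAt ℝ Btil p := fun p hp => (hBtil p hp).differentiableAt
  let G : ℝ × ℝ → ℝ := fun p => α * p.2 * Atil p + β * p.1 * Btil p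
    + p.1 * p.2 * (fderiv ℝ Atil p (1, 0) + fderiv ℝ Btil p (0, 1) - f p * Atil p - g p * Btil p)
  have hG : ContinuousOn G U := by
    have c1 := hAtil.continuousOn
    have c2 := hBtil.continuousOn
    have c3 : ContinuousOn (fun p => fderiv ℝ Atil p (1, 0)) U :=
      hAtil.fderiv.continuousOn.clm_apply continuousOn_const
    have c4 : ContinuousOn (fun p => fderiv ℝ Btil p (0, 1)) U :=
      hBtil.fderiv.continuousOn.clm_apply continuousOn_const
    fun_prop
  have hid : ∀ p ∈ U, p.1 ≠ 0 → p.2 ≠ 0 → G p = 0 := by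
    intro p hp h1 h2
    have hx : HasFDerivAt (fun p : ℝ × ℝ => p.1) (ContinuousLinearMap.fst ℝ ℝ ℝ) p := hasFDerivAt_fst
    have hy : HasFDerivAt (fun p : ℝ × ℝ => p.2) (ContinuousLinearMap.snd ℝ ℝ ℝ) p := hasFDerivAt_snd
    have hm := (hx.pow α).mul (hy.pow β)
    have hA : fderiv ℝ A p (1, 0) = α * p.1 ^ (α - 1) * p.2 ^ β * Atil p
        + p.1 ^ α * p.2 ^ β * fderiv ℝ Atil p (1, 0) := by
      have := hm.mul (hdA p hp).hasFDerivAt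
      have h3 := this.congr_of_eventuallyEq (f₁ := A) (Eventually.of_forall hAdef)
      rw [h3.fderiv]
      simp
      ring
    have hB : fderiv ℝ B p (0, 1) = β * p.1 ^ α * p.2 ^ (β - 1) * Btil p
        + p.1 ^ α * p.2 ^ β * fderiv ℝ Btil p (0, 1) := by
      have := hm.mul (hdB p hp).hasFDerivAt
      have h3 := this.congr_of_eventuallyEq (f₁ := B) (Eventually.of_forall hBdef)
      rw [h3.fderiv]
      simp
      ring
    have hd := hdiv p hp
    rw [hA, hB, hAdef, hBdef] at hd
    have pw : ∀ (n : ℕ) (x : ℝ), (n : ℝ) * x ^ n = n * x ^ (n - 1) * x := by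
      intro n x
      cases n with
      | zero => simp
      | succ k => simp [pow_succ]; ring
    have e1 := pw α p.1
    have e2 := pw β p.2
    have hne : p.1 ^ α * p.2 ^ β ≠ 0 := mul_ne_zero (pow_ne_zero _ h1) (pow_ne_zero _ h2)
    have : p.1 ^ α * p.2 ^ β * G p = 0 := by
      simp only [G]
      linear_combination p.1 * p.2 * hd + p.2 ^ β * p.2 * Atil p * e1 + p.1 ^ α * p.1 * Btil p * e2
    exact (mul_eq_zero.1 this).resolve_left hne
  have hUn : ∀ p ∈ U, U ∈ 𝓝 p := fun p hp => hU.mem_nhds hp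
  constructor
  · intro hα
    have hα' : (α : ℝ) ≠ 0 := Nat.cast_ne_zero.2 hα
    have z1 : ∀ y : ℝ, (0, y) ∈ U → y ≠ 0 → Atil (0, y) = 0 := by
      intro y hy hy0
      have hc : ContinuousAt (fun x : ℝ => ((x, y) : ℝ × ℝ)) 0 := by fun_prop
      have := eq_zero_of_punctured (fun x => G (x, y))
        (ContinuousAt.comp (f := fun x : ℝ => ((x, y) : ℝ × ℝ)) (hG.continuousAt (hUn _ hy)) hc)
        ((hc.eventually (hUn _ hy)).mono fun x hx hx0 => hid _ hx hx0 hy0)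
      simpa [G, hα, hy0] using this
    have z2 : ∀ y : ℝ, (0, y) ∈ U → Atil (0, y) = 0 := by
      intro y hy
      by_cases hy0 : y = 0
      · subst hy0
        have hc : ContinuousAt (fun x : ℝ => ((0, x) : ℝ × ℝ)) 0 := by fun_prop
        exact eq_zero_of_punctured (fun x => Atil (0, x))
          (ContinuousAt.comp (f := fun x : ℝ => ((0, x) : ℝ × ℝ)) (hAtil _ hy).continuousAt hc)
          ((hc.eventually (hUn _ hy)).mono fun x hx hx0 => z1 _ hx hx0)
      · exact z1 y hy hy0
    apply pack_division U hU h0 Atil (fun p => p.1)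
    refine analytic_division
      ((ContinuousLinearMap.inr ℝ ℝ ℝ).comp (ContinuousLinearMap.snd ℝ ℝ ℝ)) (1, 0) _ ?_ ?_ ?_ _
      (hAtil 0 h0) ?_
    · refine ContinuousLinearMap.opNorm_le_bound _ zero_le_one fun z => ?_
      simp [Prod.norm_def]
    · simp [Prod.norm_def]
    · intro z; ext <;> simp
    · have hc : ContinuousAt (fun z : ℝ × ℝ => ((0, z.2) : ℝ × ℝ)) 0 := by fun_prop
      exact (hc.eventually (hUn _ h0)).mono fun z hz => z2 _ hz
  · intro hβ
    have hβ' : (β : ℝ) ≠ 0 := Nat.cast_ne_zero.2 hβ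
    have z1 : ∀ x : ℝ, (x, 0) ∈ U → x ≠ 0 → Btil (x, 0) = 0 := by
      intro y hy hy0
      have hc : ContinuousAt (fun x : ℝ => ((y, x) : ℝ × ℝ)) 0 := by fun_prop
      have := eq_zero_of_punctured (fun x => G (y, x))
        (ContinuousAt.comp (f := fun x : ℝ => ((y, x) : ℝ × ℝ)) (hG.continuousAt (hUn _ hy)) hc)
        ((hc.eventually (hUn _ hy)).mono fun x hx hx0 => hid _ hx hy0 hx0)
      simpa [G, hβ, hy0] using this
    have z2 : ∀ y : ℝ, (y, 0) ∈ U → Btil (y, 0) = 0 := by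
      intro y hy
      by_cases hy0 : y = 0
      · subst hy0
        have hc : ContinuousAt (fun x : ℝ => ((x, 0) : ℝ × ℝ)) 0 := by fun_prop
        exact eq_zero_of_punctured (fun x => Btil (x, 0))
          (ContinuousAt.comp (f := fun x : ℝ => ((x, 0) : ℝ × ℝ)) (hBtil _ hy).continuousAt hc)
          ((hc.eventually (hUn _ hy)).mono fun x hx hx0 => z1 _ hx hx0)
      · exact z1 y hy hy0
    apply pack_division U hU h0 Btil (fun p => p.2)
    refine analytic_division
      ((ContinuousLinearMap.inl ℝ ℝ ℝ).comp (ContinuousLinearMap.fst ℝ ℝ ℝ)) (0, 1) _ ?_ ?_ ?_ _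
      (hBtil 0 h0) ?_
    · refine ContinuousLinearMap.opNorm_le_bound _ zero_le_one fun z => ?_
      simp [Prod.norm_def]
    · simp [Prod.norm_def]
    · intro z; ext <;> simp
    · have hc : ContinuousAt (fun z : ℝ × ℝ => ((z.1, 0) : ℝ × ℝ)) 0 := by fun_prop
      exact (hc.eventually (hUn _ h0)).mono fun z hz => z2 _ hz
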